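/- arXiv:1312.3679 — 2 statements merged into one kernel-verified Lean document; each statement's English description precedes it below -/
import Mathlib

section
/- A signature function σ on the triples of [n] can be realized as the signature function of a pseudolinear x-monotone drawing of K_n if and only if every 4-tuple a < b < c < d is of one of the eight forms ++++, +++−, ++−−, +−−−, −−−−, −−−+, −−++, −+++ in σ (equivalently, the sequence σ(a,b,c), σ(a,b,d), σ(a,c,d), σ(b,c,d) is monotone in the sign ordering). -/
/-- `Zval n` is Hill's conjectured value
`Z(n) = (1/4)⌊n/2⌋⌊(n−1)/2⌋⌊(n−2)/2⌋⌊(n−3)/2⌋` for the crossing number of `K n`.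
(The product of the four floors is always divisible by 4, so natural division is exact.) -/
def Zval (n : ℕ) : ℕ :=
  n / 2 * ((n - 1) / 2) * ((n - 2) / 2) * ((n - 3) / 2) / 4

/-- An x-monotone drawing of the complete graph `K n`: vertices `v i = (x i, 0)` with
`x` strictly increasing, and for each pair `i < j` a continuous function `e i j` on
`[x i, x j]` vanishing at the endpoints, whose graph is the arc of the edge `{i, j}`.
Edges avoid the intermediate vertices, any two distinct edges meet in finitely many
interior parameters, and at each such common point the difference changes sign
(a proper crossing). -/
structure XMonotoneDrawing (n : ℕ) where
  x : Fin n → ℝ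
  x_strictMono : StrictMono x
  e : Fin n → Fin n → ℝ → ℝ
  cont : ∀ i j : Fin n, i < j → ContinuousOn (e i j) (Set.Icc (x i) (x j))
  end_left : ∀ i j : Fin n, i < j → e i j (x i) = 0
  end_right : ∀ i j : Fin n, i < j → e i j (x j) = 0
  avoid_vertex : ∀ i m j : Fin n, i < m → m < j → e i j (x m) ≠ 0
  cross_finite : ∀ i j k l : Fin n, i < j → k < l → (i, j) ≠ (k, l) →
    {t : ℝ | max (x i) (x k) < t ∧ t < min (x j) (x l) ∧ e i j t = e k l t}.Finite
  sign_change : ∀ i j k l : Fin n, i < j → k < l → (i, j) ≠ (k, l) →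
    ∀ t : ℝ, max (x i) (x k) < t → t < min (x j) (x l) → e i j t = e k l t →
      ∃ ε > (0 : ℝ), ∀ s : ℝ, max (x i) (x k) < s → t - ε < s → s < t →
        ∀ u : ℝ, u < min (x j) (x l) → t < u → u < t + ε →
          (e i j s - e k l s) * (e i j u - e k l u) < 0

namespace XMonotoneDrawing

variable {n : ℕ}

/-- The set of parameters at which the edges `{i,j}` and `{k,l}` cross
(both edges are parametrized over the `x`-axis). -/
def crossSet (D : XMonotoneDrawing n) (i j k l : Fin n) : Set ℝ :=
  {t : ℝ | max (D.x i) (D.x k) < t ∧ t < min (D.x j) (D.x l) ∧ D.e i j t = D.e k l t}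

/-- The number of crossings between the edges `{i,j}` and `{k,l}`. -/
noncomputable def crossCount (D : XMonotoneDrawing n) (i j k l : Fin n) : ℕ :=
  (D.crossSet i j k l).ncard

/-- Two edges `{i,j}` and `{k,l}` are adjacent if they share an endpoint index. -/
def Adj (i j k l : Fin n) : Prop := i = k ∨ i = l ∨ j = k ∨ j = l

/-- A drawing is semisimple if no two adjacent edges cross. -/
def Semisimple (D : XMonotoneDrawing n) : Prop :=
  ∀ i j k l : Fin n, i < j → k < l → (i, j) ≠ (k, l) → Adj i j k l →
    D.crossCount i j k l = 0

/-- A drawing is weakly semisimple if every two adjacent edges cross an even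
number of times. -/
def WeaklySemisimple (D : XMonotoneDrawing n) : Prop :=
  ∀ i j k l : Fin n, i < j → k < l → (i, j) ≠ (k, l) → Adj i j k l →
    Even (D.crossCount i j k l)

/-- A drawing is simple if no two adjacent edges cross and every two non-adjacent
edges cross at most once. -/
def Simple (D : XMonotoneDrawing n) : Prop :=
  ∀ i j k l : Fin n, i < j → k < l → (i, j) ≠ (k, l) →
    (Adj i j k l → D.crossCount i j k l = 0) ∧
    (¬ Adj i j k l → D.crossCount i j k l ≤ 1)

/-- `cr D`: the total number of crossings of `D`. (Each unordered pair of distinct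
edges is counted twice in the sum, whence the division by 2; `crossCount` is
symmetric in the two edges.) -/
noncomputable def cr (D : XMonotoneDrawing n) : ℕ :=
  (∑ p : (Fin n × Fin n) × (Fin n × Fin n),
      if p.1.1 < p.1.2 ∧ p.2.1 < p.2.2 ∧ p.1 ≠ p.2 then
        D.crossCount p.1.1 p.1.2 p.2.1 p.2.2
      else 0) / 2

/-- `ocr D`: the number of unordered pairs of edges of `D` crossing an odd number
of times. (Each unordered pair appears twice as an ordered pair.) -/
noncomputable def ocr (D : XMonotoneDrawing n) : ℕ :=
  {p : (Fin n × Fin n) × (Fin n × Fin n) |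
    p.1.1 < p.1.2 ∧ p.2.1 < p.2.2 ∧ p.1 ≠ p.2 ∧
      Odd (D.crossCount p.1.1 p.1.2 p.2.1 p.2.2)}.ncard / 2

/-- The signature of the triple `i < j < k`: `true` (i.e. `+`) if the vertex `v j`
lies below the edge `{i, k}`, i.e. `e i k (x j) > 0`, and `false` (i.e. `−`) otherwise. -/
noncomputable def sig (D : XMonotoneDrawing n) (i j k : Fin n) : Bool :=
  if 0 < D.e i k (D.x j) then true else false

/-- `D` realizes the signature function `σ` if `σ_D` and `σ` agree on all
increasing triples. -/
def Realizes (D : XMonotoneDrawing n) (σ : Fin n → Fin n → Fin n → Bool) : Prop :=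
  ∀ i j k : Fin n, i < j → j < k → D.sig i j k = σ i j k

/-- A drawing is pseudolinear if its edges extend to continuous curves over all of `ℝ`
that avoid all vertices other than their endpoints and such that any two of these
extended curves cross exactly once (the crossing being a sign change of the difference). -/
def Pseudolinear (D : XMonotoneDrawing n) : Prop :=
  ∃ p : Fin n → Fin n → ℝ → ℝ,
    (∀ i j : Fin n, i < j → Continuous (p i j)) ∧
    (∀ i j : Fin n, i < j → ∀ t ∈ Set.Icc (D.x i) (D.x j), p i j t = D.e i j t) ∧
    (∀ i j m : Fin n, i < j → m ≠ i → m ≠ j → p i j (D.x m) ≠ 0) ∧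
    (∀ i j k l : Fin n, i < j → k < l → (i, j) ≠ (k, l) →
      ∃ t : ℝ, p i j t = p k l t ∧
        ∀ s u : ℝ, s < t → t < u →
          (p i j s - p k l s) * (p i j u - p k l u) < 0)

/-- The arc of the edge `{i, j}` as a subset of the plane `ℝ × ℝ`. -/
def edgeArc (D : XMonotoneDrawing n) (i j : Fin n) : Set (ℝ × ℝ) :=
  {q : ℝ × ℝ | D.x i ≤ q.1 ∧ q.1 ≤ D.x j ∧ q.2 = D.e i j q.1}

/-- The union of all edge arcs of the drawing. -/
def arcUnion (D : XMonotoneDrawing n) : Set (ℝ × ℝ) :=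
  ⋃ i : Fin n, ⋃ j : Fin n, ⋃ (_ : i < j), D.edgeArc i j

end XMonotoneDrawing

namespace Sig

variable {n : ℕ}

/-- With respect to a signature function `σ`, the vertex `m ∉ {i, j}` is on the left of
the directed edge `(i, j)` (where `i < j`). -/
def LeftOf (σ : Fin n → Fin n → Fin n → Bool) (i j m : Fin n) : Prop :=
  (i < m ∧ m < j ∧ σ i m j = false) ∨ (m < i ∧ σ m i j = true) ∨ (j < m ∧ σ i j m = true)

/-- The number of vertices on the left of the directed edge `(i, j)`. -/
noncomputable def leftCount (σ : Fin n → Fin n → Fin n → Bool) (i j : Fin n) : ℕ :=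
  {m : Fin n | LeftOf σ i j m}.ncard

/-- The edge `{i, j}` (with `i < j`) is a `k`-edge of `σ` if `min(ℓ, n − 2 − ℓ) = k`,
where `ℓ` is the number of vertices on its left. -/
def IsKEdge (σ : Fin n → Fin n → Fin n → Bool) (k : ℕ) (i j : Fin n) : Prop :=
  min (leftCount σ i j) (n - 2 - leftCount σ i j) = k

/-- `Ek σ k`: the number of `k`-edges of `σ`. -/
noncomputable def Ek (σ : Fin n → Fin n → Fin n → Bool) (k : ℕ) : ℕ :=
  {p : Fin n × Fin n | p.1 < p.2 ∧ IsKEdge σ k p.1 p.2}.ncard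

/-- `Ele σ k = E_{≤k}(σ)`: the number of `≤k`-edges of `σ`. -/
noncomputable def Ele (σ : Fin n → Fin n → Fin n → Bool) (k : ℕ) : ℕ :=
  ∑ i ∈ Finset.range (k + 1), Ek σ i

/-- `Elele σ k = E_{≤≤k}(σ) = Σ_{j=0}^{k} E_{≤j}(σ)`. -/
noncomputable def Elele (σ : Fin n → Fin n → Fin n → Bool) (k : ℕ) : ℕ :=
  ∑ j ∈ Finset.range (k + 1), Ele σ j

/-- `E_{≤≤k}` with an integer index, which vanishes for negative `k`. -/
noncomputable def ElelZ (σ : Fin n → Fin n → Fin n → Bool) (k : ℤ) : ℕ :=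
  if 0 ≤ k then Elele σ k.toNat else 0

/-- The left count of the edge `{i, j}` in the drawing restricted to the first
`n − 1` vertices (the last vertex deleted). -/
noncomputable def leftCountRes (σ : Fin n → Fin n → Fin n → Bool) (i j : Fin n) : ℕ :=
  {m : Fin n | LeftOf σ i j m ∧ (m : ℕ) + 1 < n}.ncard

/-- The edge `{i, j}` is a `k`-edge of the restriction of `σ` to the first `n − 1`
vertices (there `min(ℓ', (n−1) − 2 − ℓ') = k`). -/
def IsKEdgeRes (σ : Fin n → Fin n → Fin n → Bool) (k : ℕ) (i j : Fin n) : Prop :=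
  min (leftCountRes σ i j) (n - 3 - leftCountRes σ i j) = k

/-- The edge `{i, j}` is a `(D,D')`-invariant `≤k`-edge: it avoids the last vertex and
is an `m`-edge with `m ≤ k` both in `σ` and in the restriction of `σ` to the first
`n − 1` vertices. -/
def InvariantLeK (σ : Fin n → Fin n → Fin n → Bool) (k : ℕ) (i j : Fin n) : Prop :=
  (j : ℕ) + 1 < n ∧ (∃ m ≤ k, IsKEdge σ m i j) ∧ (∃ m ≤ k, IsKEdgeRes σ m i j)

/-- The ten 4-tuple forms allowed in signature functions of semisimple x-monotone
drawings: `++++, −−−−, ++−−, −−++, −++−, +−−+, −−−+, +++−, +−−−, −+++`. -/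
def AllowedForm (a b c d : Bool) : Prop :=
  (a, b, c, d) ∈ ([(true, true, true, true), (false, false, false, false),
    (true, true, false, false), (false, false, true, true),
    (false, true, true, false), (true, false, false, true),
    (false, false, false, true), (true, true, true, false),
    (true, false, false, false), (false, true, true, true)] :
      List (Bool × Bool × Bool × Bool))

/-- A signature function is admissible if every increasing 4-tuple is of one of the
ten allowed forms. -/
def Admissible (σ : Fin n → Fin n → Fin n → Bool) : Prop :=
  ∀ a b c d : Fin n, a < b → b < c → c < d →
    AllowedForm (σ a b c) (σ a b d) (σ a c d) (σ b c d)

/-- The six convex forms: `++++, −−−−, ++−−, −−++, −++−, +−−+`. -/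
def ConvexForm (a b c d : Bool) : Prop :=
  (a, b, c, d) ∈ ([(true, true, true, true), (false, false, false, false),
    (true, true, false, false), (false, false, true, true),
    (false, true, true, false), (true, false, false, true)] :
      List (Bool × Bool × Bool × Bool))

/-- The 4-tuple `a < b < c < d` is convex in `σ`. -/
def Convex4 (σ : Fin n → Fin n → Fin n → Bool) (a b c d : Fin n) : Prop :=
  ConvexForm (σ a b c) (σ a b d) (σ a c d) (σ b c d)

/-- The eight 4-tuple forms of pseudolinear x-monotone drawings (the sign-monotone
sequences): `++++, +++−, ++−−, +−−−, −−−−, −−−+, −−++, −+++`. -/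
def PLForm (a b c d : Bool) : Prop :=
  (a, b, c, d) ∈ ([(true, true, true, true), (true, true, true, false),
    (true, true, false, false), (true, false, false, false),
    (false, false, false, false), (false, false, false, true),
    (false, false, true, true), (false, true, true, true)] :
      List (Bool × Bool × Bool × Bool))

/-- The relation `j ⋖ k` on `{j : i < j}`: `j ⋖ k` iff (`j < k` and `σ i j k = +`)
or (`k < j` and `σ i k j = −`). -/
def Below (σ : Fin n → Fin n → Fin n → Bool) (i j k : Fin n) : Prop :=
  (j < k ∧ σ i j k = true) ∨ (k < j ∧ σ i k j = false)

end Sig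

/-!
If the edges extend to pseudolines, then for `a < b < c < d` the difference of the pseudolines
through `a, d` and through `b, c` changes sign only once, and its signs at the four vertices are
`σ a b c`, `σ a b d`, `σ a c d`, `σ b c d`.

Conversely, comparing the pseudoline through `i, j` with one that shares an endpoint with it shows
on which side it must pass every other vertex. Draw the curves from left to right with these
prescribed sides, starting in the reverse of the order in which they have to end. Then every two
curves cross an odd number of times. Three crossings would need three vertices `a < b < c` around
which the two curves alternate in height. But a curve that passes weakly above `a`, weakly below
`b` and weakly above `c` forces `σ a b c = -`, whereas the opposite pattern forces `σ a b c = +`.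
-/

open SignType

/-! ### Curves that cross once -/

/-- `p` and `q` meet at exactly one parameter, where `p - q` changes sign: the condition that
`XMonotoneDrawing.Pseudolinear` imposes on two pseudolines. -/
def CrossesOnce (p q : ℝ → ℝ) : Prop :=
  ∃ t, p t = q t ∧ ∀ s u, s < t → t < u → (p s - q s) * (p u - q u) < 0

namespace CrossesOnce

variable {p q : ℝ → ℝ}

theorem symm (h : CrossesOnce p q) : CrossesOnce q p := by
  obtain ⟨t, ht, hcross⟩ := h
  exact ⟨t, ht.symm, fun s u hs hu => by linarith [hcross s u hs hu]⟩

theorem subsingleton_setOf_eq (h : CrossesOnce p q) : {t | p t = q t}.Subsingleton := by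
  obtain ⟨t, -, hcross⟩ := h
  have eq_crossing {x : ℝ} (hx : p x = q x) : x = t := by
    by_contra hne
    rcases lt_or_gt_of_ne hne with hxt | htx
    · simpa [hx] using hcross x (t + 1) hxt (by linarith)
    · simpa [hx] using hcross (t - 1) x (by linarith) htx
  exact fun x hx y hy => (eq_crossing hx).trans (eq_crossing hy).symm

theorem mul_neg_of_eq (h : CrossesOnce p q) {x : ℝ} (hx : p x = q x) {s u : ℝ} (hs : s < x)
    (hu : x < u) : (p s - q s) * (p u - q u) < 0 := by
  obtain ⟨t, ht, hcross⟩ := id h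
  obtain rfl : x = t := h.subsingleton_setOf_eq hx ht
  exact hcross s u hs hu

theorem sign_eq_neg_sign_of_eq (h : CrossesOnce p q) {x : ℝ} (hx : p x = q x) {s u : ℝ}
    (hs : s < x) (hu : x < u) : sign (p s - q s) = -sign (p u - q u) := by
  have hmul := sign_neg (h.mul_neg_of_eq hx hs hu)
  rw [sign_mul] at hmul
  generalize sign (p s - q s) = a at *
  generalize sign (p u - q u) = b at *
  revert a b
  decide

theorem sign_eq_of_lt_of_lt (h : CrossesOnce p q) {x : ℝ} (hx : p x = q x) {s s' : ℝ}
    (hs : s < x) (hs' : s' < x) : sign (p s - q s) = sign (p s' - q s') :=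
  (h.sign_eq_neg_sign_of_eq hx hs (lt_add_one x)).trans
    (h.sign_eq_neg_sign_of_eq hx hs' (lt_add_one x)).symm

theorem sign_eq_of_gt_of_gt (h : CrossesOnce p q) {x : ℝ} (hx : p x = q x) {u u' : ℝ}
    (hu : x < u) (hu' : x < u') : sign (p u - q u) = sign (p u' - q u') :=
  neg_injective <| (h.sign_eq_neg_sign_of_eq hx (sub_one_lt x) hu).symm.trans
    (h.sign_eq_neg_sign_of_eq hx (sub_one_lt x) hu')

theorem monotone_or_antitone_sign (h : CrossesOnce p q) :
    Monotone (fun t => sign (p t - q t)) ∨ Antitone (fun t => sign (p t - q t)) := by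
  obtain ⟨x, hx, -⟩ := id h
  have at_zero : sign (p x - q x) = 0 := by rw [hx, sub_self, sign_zero]
  obtain ⟨a, after⟩ : ∃ a, ∀ u, x < u → sign (p u - q u) = a :=
    ⟨_, fun _ hu => h.sign_eq_of_gt_of_gt hx hu (lt_add_one x)⟩
  have before (s : ℝ) (hs : s < x) : sign (p s - q s) = -a :=
    (h.sign_eq_neg_sign_of_eq hx hs (lt_add_one x)).trans
      (congrArg _ (after _ (lt_add_one x)))
  rcases le_total 0 a with ha | ha
  · have hneg : -a ≤ 0 := SignType.neg_le_neg_iff (b := 0) |>.2 ha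
    left
    intro s u hsu
    grind
  · have hneg : 0 ≤ -a := SignType.neg_le_neg_iff (a := 0) |>.2 ha
    right
    intro s u hsu
    grind

end CrossesOnce

/-- The piecewise linear function on `ℝ` with value `d k` at each integer `k`. -/
noncomputable def interp (d : ℤ → ℝ) (t : ℝ) : ℝ :=
  AffineMap.lineMap (d ⌊t⌋) (d (⌊t⌋ + 1)) (Int.fract t)

theorem interp_of_mem_Icc (d : ℤ → ℝ) {k : ℤ} {t : ℝ} (ht : t ∈ Set.Icc (k : ℝ) (k + 1)) :
    interp d t = AffineMap.lineMap (d k) (d (k + 1)) (t - k) := by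
  rcases ht.2.eq_or_lt with rfl | hlt
  · have hfloor : ⌊(k : ℝ) + 1⌋ = k + 1 := by simp
    simp [interp, hfloor]
  · have hfloor : ⌊t⌋ = k := Int.floor_eq_iff.2 ⟨ht.1, hlt⟩
    rw [interp, Int.fract, hfloor]

theorem locallyFinite_Icc_intCast : LocallyFinite fun k : ℤ => Set.Icc (k : ℝ) (k + 1) := by
  intro x
  refine ⟨Set.Ioo (x - 1) (x + 1), Ioo_mem_nhds (by linarith) (by linarith),
    (Set.finite_Icc (⌊x⌋ - 2) (⌊x⌋ + 2)).subset ?_⟩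
  rintro k ⟨y, ⟨hky, hyk⟩, hxy, hyx⟩
  constructor
  · have : (⌊x⌋ : ℝ) ≤ (k + 2 : ℤ) := by push_cast; linarith [Int.floor_le x]
    exact sub_le_iff_le_add.2 (Int.cast_le.1 this)
  · have : (k : ℝ) < (⌊x⌋ + 2 : ℤ) := by push_cast; linarith [Int.lt_floor_add_one x]
    exact (Int.cast_lt.1 this).le

theorem continuous_interp (d : ℤ → ℝ) : Continuous (interp d) := by
  refine locallyFinite_Icc_intCast.continuous ?_ (fun _ => isClosed_Icc) fun k => ?_
  · exact Set.iUnion_eq_univ_iff.2 fun t =>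
      ⟨⌊t⌋, Int.floor_le t, (Int.lt_floor_add_one t).le⟩
  · refine ContinuousOn.congr ?_ fun t ht => interp_of_mem_Icc d ht
    exact (AffineMap.lineMap_continuous.comp (continuous_sub_right (k : ℝ))).continuousOn

theorem interp_sub (d d' : ℤ → ℝ) (t : ℝ) : interp (d - d') t = interp d t - interp d' t := by
  simp only [interp, AffineMap.lineMap_apply_ring, Pi.sub_apply]
  ring

theorem interp_mem_of_convex {S : Set ℝ} (hS : Convex ℝ S) {d : ℤ → ℝ} {t : ℝ}
    (h : d ⌊t⌋ ∈ S) (h' : d (⌊t⌋ + 1) ∈ S) : interp d t ∈ S :=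
  hS.lineMap_mem h h' ⟨Int.fract_nonneg t, (Int.fract_lt_one t).le⟩

theorem interp_sign_change {d : ℤ → ℝ} {K : ℤ} (hneg : ∀ k ≤ K, d k < 0)
    (hpos : ∀ k, K < k → 0 < d k) :
    ∃ t, interp d t = 0 ∧ (∀ s < t, interp d s < 0) ∧ ∀ u, t < u → 0 < interp d u := by
  have hK := hneg K le_rfl
  have hK' := hpos (K + 1) (lt_add_one K)
  obtain ⟨r, ⟨hr0, hr1⟩, hr⟩ : ∃ r ∈ Set.Icc (0 : ℝ) 1,
      AffineMap.lineMap (d K) (d (K + 1)) r = (0 : ℝ) := by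
    rw [← Set.mem_image, ← segment_eq_image_lineMap, segment_eq_Icc (hK.trans hK').le]
    exact ⟨hK.le, hK'.le⟩
  have hmono {a b : ℝ} (hab : a < b) :=
    (lineMap_lt_lineMap_iff_of_lt' (r := a) (r' := b) (hK.trans hK')).2 hab
  have hon {t : ℝ} (ht : ⌊t⌋ = K) :
      interp d t = AffineMap.lineMap (d K) (d (K + 1)) (t - K) := by rw [interp, Int.fract, ht]
  refine ⟨K + r, ?_, fun s hs => ?_, fun u hu => ?_⟩
  · rw [interp_of_mem_Icc (k := K) d ⟨by linarith, by linarith⟩, add_sub_cancel_left, hr]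
  · have hsK : ⌊s⌋ ≤ K :=
      Int.lt_add_one_iff.1 (Int.floor_lt.2 (by push_cast; linarith))
    rcases hsK.eq_or_lt with hsK | hsK
    · rw [hon hsK, ← hr]
      exact hmono (by linarith)
    · exact interp_mem_of_convex (convex_Iio 0) (hneg _ hsK.le) (hneg _ hsK)
  · have huK : K ≤ ⌊u⌋ := Int.le_floor.2 (by linarith)
    rcases huK.eq_or_lt with huK | huK
    · rw [hon huK.symm, ← hr]
      exact hmono (by linarith)
    · exact interp_mem_of_convex (convex_Ioi 0) (hpos _ huK) (hpos _ (by omega))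

theorem crossesOnce_interp {d d' : ℤ → ℝ} {K : ℤ} (hlt : ∀ k ≤ K, d k < d' k)
    (hgt : ∀ k, K < k → d' k < d k) : CrossesOnce (interp d) (interp d') := by
  obtain ⟨t, ht, hneg, hpos⟩ := interp_sign_change (d := d - d')
    (fun k hk => sub_neg.2 (hlt k hk)) fun k hk => sub_pos.2 (hgt k hk)
  simp only [interp_sub] at ht hneg hpos
  exact ⟨t, sub_eq_zero.1 ht, fun s u hs hu => mul_neg_of_neg_of_pos (hneg s hs) (hpos u hu)⟩

/-! ### Sweeping curves through prescribed sides of points -/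

section Steps

variable {P : ℕ → Prop}

theorem exists_drop_of_le {i j : ℕ} (hij : i ≤ j) (hi : P i) (hj : ¬P j) :
    ∃ m, i ≤ m ∧ m < j ∧ P m ∧ ¬P (m + 1) := by
  induction j, hij using Nat.le_induction with
  | base => exact absurd hi hj
  | succ k hik ih =>
    by_cases hk : P k
    · exact ⟨k, hik, k.lt_succ_self, hk, hj⟩
    · obtain ⟨m, him, hmk, hm⟩ := ih hk
      exact ⟨m, him, hmk.trans k.lt_succ_self, hm⟩

theorem exists_unique_drop {n : ℕ} (h0 : P 0) (hn : ¬P n)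
    (h : ∀ a b c, a < b → b < c → c < n → P a → ¬P (a + 1) → ¬P b → P (b + 1) → P c → P (c + 1)) :
    ∃ K < n, (∀ k ≤ K, P k) ∧ ∀ k, K < k → k ≤ n → ¬P k := by
  obtain ⟨K, -, hKn, hK, hK'⟩ := exists_drop_of_le n.zero_le h0 hn
  refine ⟨K, hKn, fun k hkK => ?_, fun k hKk hkn hk => ?_⟩
  · by_contra hk
    obtain ⟨a, -, hak, ha, ha'⟩ := exists_drop_of_le k.zero_le h0 hk
    obtain ⟨b, hkb, hbK, hb, hb'⟩ :=
      exists_drop_of_le (P := fun m => ¬P m) hkK hk (not_not.2 hK)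
    exact hK' (h a b K (hak.trans_le hkb) hbK hKn ha ha' hb (not_not.1 hb') hK)
  · obtain ⟨b, hKb, hbk, hb, hb'⟩ :=
      exists_drop_of_le (P := fun m => ¬P m) hKk hK' (not_not.2 hk)
    obtain ⟨c, hkc, hcn, hc, hc'⟩ := exists_drop_of_le hkn hk hn
    exact hc' (h K b c hKb (hbk.trans_le hkc) hcn hK hK' hb (not_not.1 hb') hc)

end Steps

/-- The height in the `k`-th column of a curve that starts at height `y` and passes above, below
or through the `m`-th of a sequence of points according to the sign `s m`. Curves through a common
point reverse their vertical order there, and the shifts by `2 * 3 ^ k` keep the curves above,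
through and below the point apart. -/
noncomputable def sweep (s : ℕ → SignType) (y : ℝ) : ℕ → ℝ
  | 0 => y
  | k + 1 => if s k = 0 then -sweep s y k else sweep s y k + 2 * 3 ^ k * (s k : ℝ)

section Sweep

variable {s s' : ℕ → SignType} {y y' : ℝ} {k n : ℕ}

theorem sweep_succ_of_eq_zero (h : s k = 0) : sweep s y (k + 1) = -sweep s y k := if_pos h

theorem sweep_succ_of_ne_zero (h : s k ≠ 0) :
    sweep s y (k + 1) = sweep s y k + 2 * 3 ^ k * (s k : ℝ) := if_neg h

theorem abs_sweep_lt (hy : |y| < 1) (k : ℕ) : |sweep s y k| < 3 ^ k := by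
  induction k with
  | zero => simpa [sweep] using hy
  | succ k ih =>
    have h3 : (0 : ℝ) < 3 ^ k := by positivity
    rw [abs_lt] at ih ⊢
    rw [pow_succ]
    rcases (s k).trichotomy with h | h | h <;>
      simp only [sweep, h, SignType.coe_one, SignType.coe_neg_one, reduceCtorEq, if_true,
        if_false] <;>
      constructor <;> linarith

theorem sweep_succ_lt_of_lt (hy : |y| < 1) (hy' : |y'| < 1) (h : s k < s' k) :
    sweep s y (k + 1) < sweep s' y' (k + 1) := by
  have hk := abs_lt.1 (abs_sweep_lt (s := s) hy k)
  have hk' := abs_lt.1 (abs_sweep_lt (s := s') hy' k)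
  rcases (s k).trichotomy with hs | hs | hs <;> rcases (s' k).trichotomy with hs' | hs' | hs' <;>
    simp [hs, hs', sweep] at h ⊢ <;> linarith

theorem sweep_succ_lt_iff (h : s k = s' k) : sweep s y (k + 1) < sweep s' y' (k + 1) ↔
    if s k = 0 then sweep s' y' k < sweep s y k else sweep s y k < sweep s' y' k := by
  split_ifs with h0
  · rw [sweep_succ_of_eq_zero h0, sweep_succ_of_eq_zero (h ▸ h0), neg_lt_neg_iff]
  · rw [sweep_succ_of_ne_zero h0, sweep_succ_of_ne_zero (h ▸ h0), h, add_lt_add_iff_right]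

theorem sweep_succ_eq_iff (h : s k = s' k) :
    sweep s y (k + 1) = sweep s' y' (k + 1) ↔ sweep s y k = sweep s' y' k := by
  by_cases h0 : s k = 0
  · rw [sweep_succ_of_eq_zero h0, sweep_succ_of_eq_zero (h ▸ h0), neg_inj]
  · rw [sweep_succ_of_ne_zero h0, sweep_succ_of_ne_zero (h ▸ h0), h, add_left_inj]

theorem nonpos_and_nonneg_of_lt {a b : SignType} (h : a < b) : a ≤ 0 ∧ 0 ≤ b := by
  decide +revert

theorem sweep_succ_lt_of_keep (hy : |y| < 1) (hy' : |y'| < 1) (hlt : sweep s y k < sweep s' y' k)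
    (h : ¬(s' k ≤ 0 ∧ 0 ≤ s k)) : sweep s y (k + 1) < sweep s' y' (k + 1) := by
  rcases lt_trichotomy (s k) (s' k) with hs | hs | hs
  · exact sweep_succ_lt_of_lt hy hy' hs
  · rw [sweep_succ_lt_iff hs, if_neg]
    · exact hlt
    · exact fun h0 => h ⟨(hs ▸ h0).le, h0.ge⟩
  · exact absurd (nonpos_and_nonneg_of_lt hs) h

theorem sweep_eq_iff (hy : |y| < 1) (hy' : |y'| < 1) : sweep s y k = sweep s' y' k ↔
    (∀ m < k, s m = s' m) ∧ y = y' := by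
  induction k with
  | zero => simp [sweep]
  | succ k ih =>
    rw [Nat.forall_lt_succ_right, and_right_comm, ← ih]
    rcases lt_trichotomy (s k) (s' k) with hs | hs | hs
    · simp [(sweep_succ_lt_of_lt hy hy' hs).ne, hs.ne]
    · rw [sweep_succ_eq_iff hs, and_iff_left hs]
    · simp [(sweep_succ_lt_of_lt hy' hy hs).ne', hs.ne']

theorem sweep_lt_of_sweep_zero_lt (hy : |y| < 1) (hy' : |y'| < 1)
    (h : sweep s 0 k < sweep s' 0 k) : sweep s y k < sweep s' y' k := by
  induction k generalizing s s' y y' with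
  | zero => exact absurd h (lt_irrefl 0)
  | succ k ih =>
    rcases lt_trichotomy (s k) (s' k) with hs | hs | hs
    · exact sweep_succ_lt_of_lt hy hy' hs
    · rw [sweep_succ_lt_iff hs] at h ⊢
      split_ifs at h ⊢
      exacts [ih hy' hy h, ih hy hy' h]
    · exact absurd (sweep_succ_lt_of_lt (by simp) (by simp) hs) h.not_gt

theorem sign_sweep_add_sweep_succ (hy : |y| < 1) :
    sign (sweep s y k + sweep s y (k + 1)) = s k := by
  have hk := abs_lt.1 (abs_sweep_lt (s := s) hy k)
  rcases (s k).trichotomy with hs | hs | hs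
  · rw [hs, sign_eq_neg_one_iff, sweep_succ_of_ne_zero (by simp [hs]), hs, SignType.coe_neg_one]
    linarith
  · simp [sweep_succ_of_eq_zero hs, hs]
  · rw [hs, sign_eq_one_iff, sweep_succ_of_ne_zero (by simp [hs]), hs, SignType.coe_one]
    linarith

/-- Some three of the first `n` points have `s` weakly above `s'`, then `s'` weakly above `s`,
then `s` weakly above `s'`. -/
def Alternates (n : ℕ) (s s' : ℕ → SignType) : Prop :=
  ∃ a b c, a < b ∧ b < c ∧ c < n ∧
    (s' a ≤ 0 ∧ 0 ≤ s a) ∧ (s b ≤ 0 ∧ 0 ≤ s' b) ∧ (s' c ≤ 0 ∧ 0 ≤ s c)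

/-- The starting height of the curve with signs `s`. The order in which curves end up after `n`
points depends only on their signs, so it is that of the values `sweep s 0 n`. Starting in the
reverse order makes every two curves swap an odd number of times; the denominator keeps the
heights in the interval `(-1, 1)`. -/
noncomputable def initialHeight (n : ℕ) (s : ℕ → SignType) : ℝ := -sweep s 0 n / 3 ^ n

theorem abs_initialHeight_lt_one : |initialHeight n s| < 1 := by
  have h3 : (0 : ℝ) < 3 ^ n := by positivity
  rw [initialHeight, abs_div, abs_neg, abs_of_pos h3, div_lt_one h3]
  exact abs_sweep_lt (by simp) n

theorem exists_unique_swap {y y' : ℝ} (hy : |y| < 1) (hy' : |y'| < 1) (h0 : y < y')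
    (hn : sweep s' y' n < sweep s y n) (halt : ¬Alternates n s s') :
    ∃ K < n, (∀ k ≤ K, sweep s y k < sweep s' y' k) ∧
      ∀ k, K < k → k ≤ n → sweep s' y' k < sweep s y k := by
  have hne (k : ℕ) : sweep s' y' k ≠ sweep s y k := fun h =>
    h0.ne' ((sweep_eq_iff hy' hy).1 h).2
  have swap {k : ℕ} (h : sweep s y k < sweep s' y' k)
      (h' : ¬sweep s y (k + 1) < sweep s' y' (k + 1)) : s' k ≤ 0 ∧ 0 ≤ s k :=
    not_not.1 (mt (sweep_succ_lt_of_keep hy hy' h) h')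
  have swap' {k : ℕ} (h : ¬sweep s y k < sweep s' y' k)
      (h' : sweep s y (k + 1) < sweep s' y' (k + 1)) : s k ≤ 0 ∧ 0 ≤ s' k :=
    not_not.1 (mt (sweep_succ_lt_of_keep hy' hy ((not_lt.1 h).lt_of_ne (hne k))) h'.not_gt)
  obtain ⟨K, hKn, hle, hgt⟩ :=
    exists_unique_drop (P := fun k => sweep s y k < sweep s' y' k) h0 hn.not_gt
      fun a b c hab hbc hcn ha ha' hb hb' hc => not_not.1 fun hc' =>
        halt ⟨a, b, c, hab, hbc, hcn, swap ha ha', swap' hb hb', swap hc hc'⟩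
  exact ⟨K, hKn, hle, fun k hKk hkn => (not_lt.1 (hgt k hKk hkn)).lt_of_ne (hne k)⟩

/-- The curve that passes above, below or through the point `(k + 1 / 2, 0)` according to the
sign `s k`, for `k < n`. -/
noncomputable def pseudoline (n : ℕ) (s : ℕ → SignType) : ℝ → ℝ :=
  interp fun k => sweep s (initialHeight n s) (min k.toNat n)

theorem sign_pseudoline (hk : k < n) : sign (pseudoline n s (k + 1 / 2)) = s k := by
  have hmid : pseudoline n s (k + 1 / 2) = 2⁻¹ * (sweep s (initialHeight n s) k +
      sweep s (initialHeight n s) (k + 1)) := by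
    rw [pseudoline, interp_of_mem_Icc (k := k) _ ⟨by simp, by push_cast; linarith⟩]
    have hk' : min k n = k := min_eq_left hk.le
    have hk'' : min (k + 1) n = k + 1 := min_eq_left hk
    have : ((k : ℤ) + 1).toNat = k + 1 := rfl
    rw [AffineMap.lineMap_apply_ring]
    simp only [Int.toNat_natCast, this, hk', hk'']
    push_cast
    ring
  rw [hmid, sign_mul, sign_pos (by norm_num), one_mul,
    sign_sweep_add_sweep_succ abs_initialHeight_lt_one]

theorem crossesOnce_pseudoline_of_sweep_lt (hlt : sweep s' 0 n < sweep s 0 n)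
    (halt : ¬Alternates n s s') : CrossesOnce (pseudoline n s) (pseudoline n s') := by
  have h0 : initialHeight n s < initialHeight n s' :=
    div_lt_div_of_pos_right (neg_lt_neg hlt) (by positivity)
  have hn := sweep_lt_of_sweep_zero_lt (abs_initialHeight_lt_one (n := n) (s := s'))
    (abs_initialHeight_lt_one (n := n) (s := s)) hlt
  obtain ⟨K, hKn, hle, hgt⟩ :=
    exists_unique_swap abs_initialHeight_lt_one abs_initialHeight_lt_one h0 hn halt
  refine crossesOnce_interp (K := K) (fun k hk => hle _ ?_) fun k hk => hgt _ ?_ ?_ <;> omega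

theorem crossesOnce_pseudoline (hne : ∃ k < n, s k ≠ s' k) (halt : ¬Alternates n s s')
    (halt' : ¬Alternates n s' s) : CrossesOnce (pseudoline n s) (pseudoline n s') := by
  have hends : sweep s 0 n ≠ sweep s' 0 n := by
    obtain ⟨k, hk, hsk⟩ := hne
    exact fun h => hsk (((sweep_eq_iff (by simp) (by simp)).1 h).1 k hk)
  rcases hends.lt_or_gt with hlt | hgt
  · exact (crossesOnce_pseudoline_of_sweep_lt hlt halt').symm
  · exact crossesOnce_pseudoline_of_sweep_lt hgt halt

end Sweep

/-! ### Sides of pseudolines determined by a signature -/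

/-- The sign of a triple with signature value `b`. -/
def boolSign (b : Bool) : SignType := if b then 1 else -1

section BoolSign

variable {a b : Bool}

theorem boolSign_not : boolSign (!b) = -boolSign b := by decide +revert

theorem boolSign_le_boolSign : boolSign a ≤ boolSign b ↔ a ≤ b := by decide +revert

theorem boolSign_ne_zero : boolSign b ≠ 0 := by decide +revert

theorem boolSign_nonneg_iff : 0 ≤ boolSign b ↔ b = true := by decide +revert

theorem neg_boolSign_nonneg_iff : 0 ≤ -boolSign b ↔ b = false := by decide +revert

end BoolSign

namespace Sig

theorem plForm_iff_monotone {a b c d : Bool} : PLForm a b c d ↔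
    (a ≤ b ∧ b ≤ c ∧ c ≤ d) ∨ (d ≤ c ∧ c ≤ b ∧ b ≤ a) := by
  unfold PLForm
  decide +revert

theorem plForm_iff_eq_of_eq {a b c d : Bool} : PLForm a b c d ↔
    (a = c → a = b) ∧ (b = d → b = c) ∧ (a = d → a = b) := by
  unfold PLForm
  decide +revert

theorem plForm_not {a b c d : Bool} : PLForm (!a) (!b) (!c) (!d) ↔ PLForm a b c d := by
  simp only [plForm_iff_eq_of_eq, Bool.not_inj_iff]

variable {α : Type*} [LinearOrder α]

/-- Every increasing 4-tuple has one of the eight pseudolinear forms. -/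
def MonotoneForms (σ : α → α → α → Bool) : Prop :=
  ∀ a b c d, a < b → b < c → c < d → PLForm (σ a b c) (σ a b d) (σ a c d) (σ b c d)

/-- The side of the point `m` on which the pseudoline through the points `i < j` passes: `1` if the
pseudoline passes above `m`, `-1` if it passes below `m`, and `0` if `m` is `i` or `j`. -/
def side (σ : α → α → α → Bool) (i j m : α) : SignType :=
  if m < i then -boolSign (σ m i j)
  else if m = i then 0
  else if m < j then boolSign (σ i m j)
  else if m = j then 0
  else -boolSign (σ i j m)

variable {σ : α → α → α → Bool} {i j m : α}

theorem side_of_lt (h : m < i) : side σ i j m = -boolSign (σ m i j) := if_pos h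

theorem side_left : side σ i j i = 0 := by simp [side]

theorem side_of_lt_of_lt (him : i < m) (hmj : m < j) : side σ i j m = boolSign (σ i m j) := by
  simp [side, him.not_gt, him.ne', hmj]

theorem side_right (hij : i < j) : side σ i j j = 0 := by simp [side, hij.not_gt]

theorem side_of_gt (hij : i < j) (hjm : j < m) : side σ i j m = -boolSign (σ i j m) := by
  simp [side, hjm.not_gt, hjm.ne', (hij.trans hjm).not_gt, (hij.trans hjm).ne']

theorem side_eq_zero_iff (hij : i < j) : side σ i j m = 0 ↔ m = i ∨ m = j := by
  simp only [side, apply_ite (· = (0 : SignType)), SignType.neg_eq_zero_iff]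
  have := @boolSign_ne_zero
  grind

theorem side_not : side (fun a b c => !σ a b c) i j m = -side σ i j m := by
  simp only [side, boolSign_not]
  split_ifs <;> simp

theorem side_not_nonneg_iff : 0 ≤ side (fun a b c => !σ a b c) i j m ↔ side σ i j m ≤ 0 := by
  rw [side_not]
  exact SignType.neg_le_neg_iff (a := 0)

theorem side_not_nonpos_iff : side (fun a b c => !σ a b c) i j m ≤ 0 ↔ 0 ≤ side σ i j m := by
  rw [side_not]
  exact SignType.neg_le_neg_iff (b := 0)

theorem side_nonneg_iff (hij : i < j) : 0 ≤ side σ i j m ↔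
    (m < i → σ m i j = false) ∧ (i < m → m < j → σ i m j = true) ∧ (j < m → σ i j m = false) := by
  unfold side
  split_ifs <;> grind [neg_boolSign_nonneg_iff, boolSign_nonneg_iff]

theorem side_nonpos_iff (hij : i < j) : side σ i j m ≤ 0 ↔
    (m < i → σ m i j = true) ∧ (i < m → m < j → σ i m j = false) ∧ (j < m → σ i j m = true) := by
  simpa [side_not_nonneg_iff] using side_nonneg_iff (σ := fun a b c => !σ a b c) hij

namespace MonotoneForms

variable {a b c : α}

theorem not (hσ : MonotoneForms σ) : MonotoneForms fun a b c => !σ a b c :=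
  fun a b c d hab hbc hcd => plForm_not.2 (hσ a b c d hab hbc hcd)

theorem eq_of_eq (hσ : MonotoneForms σ) {d : α} (hab : a < b) (hbc : b < c) (hcd : c < d) :
    (σ a b c = σ a c d → σ a b c = σ a b d) ∧ (σ a b d = σ b c d → σ a b d = σ a c d) ∧
      (σ a b c = σ b c d → σ a b c = σ a b d) :=
  plForm_iff_eq_of_eq.1 (hσ a b c d hab hbc hcd)

theorem eq_true_of_side_of_lt_of_lt (hσ : MonotoneForms σ) (hij : i < j) (hia : i < a)
    (hab : a < b) (ha : 0 ≤ side σ i j a) (hb : side σ i j b ≤ 0) : σ i a b = true := by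
  rw [side_nonneg_iff hij] at ha
  rw [side_nonpos_iff hij] at hb
  rcases lt_trichotomy j a with hja | rfl | haj
  · grind only [hσ.eq_of_eq hij hja hab]
  · exact hb.2.2 hab
  rcases lt_trichotomy j b with hjb | rfl | hbj
  · grind only [hσ.eq_of_eq hia haj hjb]
  · exact ha.2.1 hia hab
  · grind only [hσ.eq_of_eq hia hab hbj]

theorem eq_false_of_side_of_gt_of_gt (hσ : MonotoneForms σ) (hij : i < j) (hab : a < b)
    (hbi : b < i) (ha : 0 ≤ side σ i j a) (hb : side σ i j b ≤ 0) : σ a b i = false := by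
  rw [side_nonneg_iff hij] at ha
  rw [side_nonpos_iff hij] at hb
  grind only [hσ.eq_of_eq hab hbi hij]

theorem eq_false_of_side_of_lt_of_gt (hσ : MonotoneForms σ) (hij : i < j) (hai : a < i)
    (hib : i < b) (ha : 0 ≤ side σ i j a) (hb : 0 ≤ side σ i j b) : σ a i b = false := by
  rw [side_nonneg_iff hij] at ha hb
  rcases lt_trichotomy j b with hjb | rfl | hbj
  · grind only [hσ.eq_of_eq hai hij hjb]
  · exact ha.1 hai
  · grind only [hσ.eq_of_eq hai hib hbj]

theorem eq_false_of_side_of_lt_of_lt (hσ : MonotoneForms σ) (hij : i < j) (hia : i < a)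
    (hab : a < b) (ha : side σ i j a ≤ 0) (hb : 0 ≤ side σ i j b) : σ i a b = false := by
  simpa using hσ.not.eq_true_of_side_of_lt_of_lt hij hia hab (side_not_nonneg_iff.2 ha)
    (side_not_nonpos_iff.2 hb)

theorem eq_true_of_side_of_gt_of_gt (hσ : MonotoneForms σ) (hij : i < j) (hab : a < b)
    (hbi : b < i) (ha : side σ i j a ≤ 0) (hb : 0 ≤ side σ i j b) : σ a b i = true := by
  simpa using hσ.not.eq_false_of_side_of_gt_of_gt hij hab hbi (side_not_nonneg_iff.2 ha)
    (side_not_nonpos_iff.2 hb)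

/- The sides of `a`, `b`, `c` sort these points by the slopes of the pseudolines joining them to
`i`. This gives the signs of all triples of `i, a, b, c` that contain `i`, and the form of this
4-tuple then gives the sign of `a, b, c`. -/
theorem eq_false_of_side_alternates (hσ : MonotoneForms σ) (hij : i < j) (hab : a < b)
    (hbc : b < c) (ha : 0 ≤ side σ i j a) (hb : side σ i j b ≤ 0) (hc : 0 ≤ side σ i j c) :
    σ a b c = false := by
  rcases lt_trichotomy i a with hia | rfl | hai
  · have hiab := hσ.eq_true_of_side_of_lt_of_lt hij hia hab ha hb
    have hibc := hσ.eq_false_of_side_of_lt_of_lt hij (hia.trans hab) hbc hb hc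
    grind only [hσ.eq_of_eq hia hab hbc]
  · exact hσ.eq_false_of_side_of_lt_of_lt hij hab hbc hb hc
  rcases lt_trichotomy i b with hib | rfl | hbi
  · have haic := hσ.eq_false_of_side_of_lt_of_gt hij hai (hib.trans hbc) ha hc
    have hibc := hσ.eq_false_of_side_of_lt_of_lt hij hib hbc hb hc
    grind only [hσ.eq_of_eq hai hib hbc]
  · exact hσ.eq_false_of_side_of_lt_of_gt hij hab hbc ha hc
  rcases lt_trichotomy i c with hic | rfl | hci
  · have habi := hσ.eq_false_of_side_of_gt_of_gt hij hab hbi ha hb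
    have haic := hσ.eq_false_of_side_of_lt_of_gt hij hai hic ha hc
    grind only [hσ.eq_of_eq hab hbi hic]
  · exact hσ.eq_false_of_side_of_gt_of_gt hij hab hbc ha hb
  · have habi := hσ.eq_false_of_side_of_gt_of_gt hij hab (hbc.trans hci) ha hb
    have hbci := hσ.eq_true_of_side_of_gt_of_gt hij hbc hci hb hc
    grind only [hσ.eq_of_eq hab hbc hci]

theorem eq_true_of_side_alternates (hσ : MonotoneForms σ) (hij : i < j) (hab : a < b)
    (hbc : b < c) (ha : side σ i j a ≤ 0) (hb : 0 ≤ side σ i j b) (hc : side σ i j c ≤ 0) :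
    σ a b c = true := by
  simpa using hσ.not.eq_false_of_side_alternates hij hab hbc (side_not_nonneg_iff.2 ha)
    (side_not_nonpos_iff.2 hb) (side_not_nonneg_iff.2 hc)

end MonotoneForms

end Sig

/-! ### Realizing signatures by pseudolines -/

/-- The functions `p i j`, `i < j`, form a pseudolinear drawing with vertices `(x m, 0)` and
signature `σ`. Unlike the edges of a drawing they are defined on all of `ℝ`, and `sign_eq_side`
also prescribes the sides of the vertices that lie outside the interval `[x i, x j]`. -/
structure IsPseudolineRealization {α : Type*} [LinearOrder α] (σ : α → α → α → Bool) (x : α → ℝ)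
    (p : α → α → ℝ → ℝ) : Prop where
  strictMono : StrictMono x
  continuous : ∀ {i j}, i < j → Continuous (p i j)
  sign_eq_side : ∀ {i j}, i < j → ∀ m, sign (p i j (x m)) = Sig.side σ i j m
  crossesOnce : ∀ {i j k l}, i < j → k < l → (i, j) ≠ (k, l) → CrossesOnce (p i j) (p k l)

namespace IsPseudolineRealization

section

variable {α : Type*} [LinearOrder α] {σ : α → α → α → Bool} {x : α → ℝ} {p : α → α → ℝ → ℝ}
  {i j m : α}

theorem eq_zero_left (h : IsPseudolineRealization σ x p) (hij : i < j) : p i j (x i) = 0 :=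
  sign_eq_zero_iff.1 ((h.sign_eq_side hij i).trans Sig.side_left)

theorem eq_zero_right (h : IsPseudolineRealization σ x p) (hij : i < j) : p i j (x j) = 0 :=
  sign_eq_zero_iff.1 ((h.sign_eq_side hij j).trans (Sig.side_right hij))

theorem ne_zero (h : IsPseudolineRealization σ x p) (hij : i < j) (hmi : m ≠ i) (hmj : m ≠ j) :
    p i j (x m) ≠ 0 := by
  rw [← sign_ne_zero, h.sign_eq_side hij, Ne, Sig.side_eq_zero_iff hij]
  exact not_or.2 ⟨hmi, hmj⟩

theorem monotoneForms (h : IsPseudolineRealization σ x p) : Sig.MonotoneForms σ := by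
  intro a b c d hab hbc hcd
  have hac := hab.trans hbc
  have hbd := hbc.trans hcd
  have had := hac.trans hcd
  have hne : (a, d) ≠ (b, c) := fun heq => hab.ne (congrArg Prod.fst heq)
  have ha : sign (p a d (x a) - p b c (x a)) = boolSign (σ a b c) := by
    rw [h.eq_zero_left had, zero_sub, Left.sign_neg, h.sign_eq_side hbc, Sig.side_of_lt hab,
      neg_neg]
  have hb : sign (p a d (x b) - p b c (x b)) = boolSign (σ a b d) := by
    rw [h.eq_zero_left hbc, sub_zero, h.sign_eq_side had, Sig.side_of_lt_of_lt hab hbd]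
  have hc : sign (p a d (x c) - p b c (x c)) = boolSign (σ a c d) := by
    rw [h.eq_zero_right hbc, sub_zero, h.sign_eq_side had, Sig.side_of_lt_of_lt hac hcd]
  have hd : sign (p a d (x d) - p b c (x d)) = boolSign (σ b c d) := by
    rw [h.eq_zero_right had, zero_sub, Left.sign_neg, h.sign_eq_side hbc, Sig.side_of_gt hbc hcd,
      neg_neg]
  have hxab := (h.strictMono hab).le
  have hxbc := (h.strictMono hbc).le
  have hxcd := (h.strictMono hcd).le
  simp only [Sig.plForm_iff_monotone, ← boolSign_le_boolSign, ← ha, ← hb, ← hc, ← hd]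
  exact (h.crossesOnce had hbc hne).monotone_or_antitone_sign.imp
    (fun hmono => ⟨hmono hxab, hmono hxbc, hmono hxcd⟩)
    fun hanti => ⟨hanti hxcd, hanti hxbc, hanti hxab⟩

end

section

variable {n : ℕ} {σ : Fin n → Fin n → Fin n → Bool} {x : Fin n → ℝ} {p : Fin n → Fin n → ℝ → ℝ}

/-- The drawing whose edges are the restrictions of the given pseudolines. -/
noncomputable def drawing (h : IsPseudolineRealization σ x p) : XMonotoneDrawing n where
  x := x
  x_strictMono := h.strictMono
  e := p
  cont _ _ hij := (h.continuous hij).continuousOn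
  end_left _ _ hij := h.eq_zero_left hij
  end_right _ _ hij := h.eq_zero_right hij
  avoid_vertex _ _ _ him hmj := h.ne_zero (him.trans hmj) him.ne' hmj.ne
  cross_finite _ _ _ _ hij hkl hne :=
    ((h.crossesOnce hij hkl hne).subsingleton_setOf_eq.anti fun _ ht => ht.2.2).finite
  sign_change _ _ _ _ hij hkl hne _ _ _ heq :=
    ⟨1, one_pos, fun _ _ _ hs _ _ hu _ => (h.crossesOnce hij hkl hne).mul_neg_of_eq heq hs hu⟩

theorem drawing_pseudolinear (h : IsPseudolineRealization σ x p) : h.drawing.Pseudolinear :=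
  ⟨p, fun _ _ => h.continuous, fun _ _ _ _ _ => rfl, fun _ _ _ => h.ne_zero,
    fun _ _ _ _ => h.crossesOnce⟩

theorem drawing_realizes (h : IsPseudolineRealization σ x p) : h.drawing.Realizes σ := by
  intro i j k hij hjk
  have hsign := h.sign_eq_side (hij.trans hjk) j
  rw [Sig.side_of_lt_of_lt hij hjk] at hsign
  change (if 0 < p i k (x j) then true else false) = σ i j k
  simp only [← sign_eq_one_iff, hsign]
  cases σ i j k <;> rfl

end

end IsPseudolineRealization

namespace XMonotoneDrawing

variable {n : ℕ} {σ : Fin n → Fin n → Fin n → Bool} {D : XMonotoneDrawing n} {i j k : Fin n}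

theorem Realizes.sign_e (h : D.Realizes σ) (hij : i < j) (hjk : j < k) :
    sign (D.e i k (D.x j)) = boolSign (σ i j k) := by
  rw [← h i j k hij hjk, sig, boolSign]
  rcases lt_or_gt_of_ne (D.avoid_vertex i j k hij hjk) with hneg | hpos
  · simp [hneg, hneg.not_gt]
  · simp [hpos]

theorem Realizes.exists_isPseudolineRealization (h : D.Realizes σ) (hD : D.Pseudolinear) :
    ∃ p, IsPseudolineRealization σ D.x p := by
  obtain ⟨p, hcont, hext, -, hcross⟩ := hD
  have hx {i j : Fin n} (hij : i < j) : D.x i < D.x j := D.x_strictMono hij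
  have left {i j : Fin n} (hij : i < j) : p i j (D.x i) = 0 :=
    (hext i j hij _ ⟨le_rfl, (hx hij).le⟩).trans (D.end_left i j hij)
  have right {i j : Fin n} (hij : i < j) : p i j (D.x j) = 0 :=
    (hext i j hij _ ⟨(hx hij).le, le_rfl⟩).trans (D.end_right i j hij)
  have mid {i j k : Fin n} (hij : i < j) (hjk : j < k) :
      sign (p i k (D.x j)) = boolSign (σ i j k) := by
    rw [hext i k (hij.trans hjk) _ ⟨(hx hij).le, (hx hjk).le⟩, h.sign_e hij hjk]
  have crosses {i j k l : Fin n} (hij : i < j) (hkl : k < l) (hne : (i, j) ≠ (k, l)) :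
      CrossesOnce (p i j) (p k l) := hcross i j k l hij hkl hne
  refine ⟨p, D.x_strictMono, fun hij => hcont _ _ hij, fun {i j} hij m => ?_, crosses⟩
  rcases lt_trichotomy m i with hmi | rfl | him
  · have hmj := hmi.trans hij
    have hsides := (crosses hij hmj (by simp [hmi.ne'])).sign_eq_of_lt_of_lt
      ((right hij).trans (right hmj).symm) (hx hmj) (hx hij)
    rw [left hmj, left hij, sub_zero, zero_sub, Left.sign_neg, mid hmi hij] at hsides
    rw [hsides, Sig.side_of_lt hmi]
  · rw [left hij, sign_zero, Sig.side_left]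
  rcases lt_trichotomy m j with hmj | rfl | hjm
  · rw [mid him hmj, Sig.side_of_lt_of_lt him hmj]
  · rw [right hij, sign_zero, Sig.side_right hij]
  · have hsides := (crosses hij him (by simp [hjm.ne])).sign_eq_of_gt_of_gt
      ((left hij).trans (left him).symm) (hx him) (hx hij)
    rw [right him, right hij, sub_zero, zero_sub, Left.sign_neg, mid hij hjm] at hsides
    rw [hsides, Sig.side_of_gt hij hjm]

theorem exists_pseudolinear_realizes_iff : (∃ D : XMonotoneDrawing n, D.Pseudolinear ∧
    D.Realizes σ) ↔ ∃ x p, IsPseudolineRealization σ x p := by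
  constructor
  · rintro ⟨D, hD, hσ⟩
    exact ⟨D.x, hσ.exists_isPseudolineRealization hD⟩
  · rintro ⟨x, p, h⟩
    exact ⟨h.drawing, h.drawing_pseudolinear, h.drawing_realizes⟩

end XMonotoneDrawing

namespace Sig

variable {n : ℕ} {σ : Fin n → Fin n → Fin n → Bool} {i j k l : Fin n}

/-- `side σ i j` as a sequence of signs; its terms from the `n`-th on play no role. -/
def sideSeq (σ : Fin n → Fin n → Fin n → Bool) (i j : Fin n) (m : ℕ) : SignType :=
  if h : m < n then side σ i j ⟨m, h⟩ else 0

theorem sideSeq_val (m : Fin n) : sideSeq σ i j m = side σ i j m := dif_pos m.is_lt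

theorem MonotoneForms.not_alternates (hσ : MonotoneForms σ) (hij : i < j) (hkl : k < l) :
    ¬Alternates n (sideSeq σ i j) (sideSeq σ k l) := by
  rintro ⟨a, b, c, hab, hbc, hcn, ha, hb, hc⟩
  have hbn := hbc.trans hcn
  have han := hab.trans hbn
  simp only [sideSeq, han, hbn, hcn, dif_pos] at ha hb hc
  have hfalse := hσ.eq_false_of_side_alternates hij hab hbc ha.2 hb.1 hc.2
  have htrue := hσ.eq_true_of_side_alternates hkl hab hbc ha.1 hb.2 hc.1
  exact absurd (hfalse.symm.trans htrue) Bool.false_ne_true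

theorem exists_sideSeq_ne (hij : i < j) (hkl : k < l) (hne : (i, j) ≠ (k, l)) :
    ∃ m < n, sideSeq σ i j m ≠ sideSeq σ k l m := by
  by_contra! heq
  have hzero (m : Fin n) : (m = i ∨ m = j) ↔ (m = k ∨ m = l) := by
    rw [← side_eq_zero_iff (σ := σ) hij, ← side_eq_zero_iff (σ := σ) hkl, ← sideSeq_val,
      ← sideSeq_val, heq m m.is_lt]
  grind [hzero i, hzero j, hzero k, hzero l]

theorem MonotoneForms.exists_isPseudolineRealization (hσ : MonotoneForms σ) :
    ∃ x p, IsPseudolineRealization σ x p := by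
  refine ⟨fun m => m + 1 / 2, fun i j => pseudoline n (sideSeq σ i j), fun i j hij => ?_,
    fun _ => continuous_interp _, fun _ m => ?_, fun hij hkl hne => ?_⟩
  · simpa using hij
  · rw [sign_pseudoline m.is_lt, sideSeq_val]
  · exact crossesOnce_pseudoline (exists_sideSeq_ne hij hkl hne) (hσ.not_alternates hij hkl)
      (hσ.not_alternates hkl hij)

end Sig

/-- A signature function `σ` on the triples of `[n]` is realizable by
a pseudolinear x-monotone drawing of `K n` if and only if every increasing 4-tuple is of
one of the eight sign-monotone forms `++++, +++−, ++−−, +−−−, −−−−, −−−+, −−++, −+++`. -/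
theorem pseudolinear_realizable_iff_monotone_forms (n : ℕ)
    (σ : Fin n → Fin n → Fin n → Bool) :
    (∃ D : XMonotoneDrawing n, D.Pseudolinear ∧ D.Realizes σ) ↔
      ∀ a b c d : Fin n, a < b → b < c → c < d →
        Sig.PLForm (σ a b c) (σ a b d) (σ a c d) (σ b c d) := by
  rw [XMonotoneDrawing.exists_pseudolinear_realizes_iff]
  exact ⟨fun ⟨_, _, h⟩ => h.monotoneForms, Sig.MonotoneForms.exists_isPseudolineRealization⟩
end

section
/- In a simple x-monotone drawing D of K_n, the total number of crossings equals the number of 4-tuples a < b < c < d that are convex in the signature function σ_D; moreover, two non-adjacent edges of D cross only if their four endpoint indices form a convex 4-tuple in σ_D. -/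
/-!
Two edges meet over a common interval of parameters. Since every zero of their vertical difference
is a sign change, they cross an odd number of times exactly when they appear in opposite vertical
orders at the two ends of that interval. For `a < b < c < d` the ends are the vertices `b` and `c`,
so the parities are read off the signature: `{a, c}` and `{b, d}` cross oddly iff
`σ(a, b, c) = σ(b, c, d)`, and `{a, d}` and `{b, c}` cross oddly iff `σ(a, b, d) ≠ σ(a, c, d)`,
while `{a, b}` and `{c, d}` never meet. That adjacent edges do not cross restricts a 4-tuple to the
ten allowed forms, and among these the convex ones are those with exactly one odd pair. In a simple
drawing odd means one and even means zero, and grouping the pairs of edges by the four vertices they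
span turns the number of crossings into the number of convex 4-tuples.
-/

section SignChange

open Set Filter Topology

variable {α R : Type*}

theorem zeros_Ioo_eq_insert [LinearOrder α] [Zero R] {f : α → R} {p q r t : α} (hpt : p < t)
    (hrt : r < t) (htq : t < q) (hzero : f t = 0) (hleft : ∀ s ∈ Ico r t, f s ≠ 0)
    (hright : ∀ u ∈ Ioo t q, f u ≠ 0) :
    {s ∈ Ioo p q | f s = 0} = insert t {s ∈ Ioo p r | f s = 0} := by
  ext s
  constructor
  · rintro ⟨⟨hps, hsq⟩, hs0⟩
    rcases lt_trichotomy s t with hst | rfl | hts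
    · exact Or.inr ⟨⟨hps, not_le.1 fun hrs => hleft s ⟨hrs, hst⟩ hs0⟩, hs0⟩
    · exact mem_insert _ _
    · exact absurd hs0 (hright s ⟨hts, hsq⟩)
  · rintro (rfl | ⟨⟨hps, hsr⟩, hs0⟩)
    · exact ⟨⟨hpt, htq⟩, hzero⟩
    · exact ⟨⟨hps, hsr.trans (hrt.trans htq)⟩, hs0⟩

/-- The function `f` takes opposite strict signs just to the left and just to the right of `t`;
this is the proper-crossing condition on the difference of two edges. -/
def ChangesSignAt [Preorder α] [TopologicalSpace α] [Mul R] [Zero R] [LT R] (f : α → R) (t : α) :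
    Prop :=
  ∀ᶠ s in 𝓝[<] t, ∀ᶠ u in 𝓝[>] t, f s * f u < 0

theorem ChangesSignAt.exists_forall_Ico_ne_zero [LinearOrder α] [TopologicalSpace α]
    [OrderTopology α] [DenselyOrdered α] [MulZeroClass R] [Preorder R] {f : α → R} {p q t : α}
    (h : ChangesSignAt f t) (hpt : p < t) (htq : t < q) :
    ∃ r ∈ Ioo p t, ∀ s ∈ Ico r t, f s ≠ 0 := by
  have := nhdsGT_neBot_of_exists_gt ⟨q, htq⟩
  have hne : ∀ᶠ s in 𝓝[<] t, f s ≠ 0 := h.mono fun s hs hzero => by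
    obtain ⟨u, hu⟩ := hs.exists
    simp [hzero] at hu
  obtain ⟨l, hl, hsub⟩ := (mem_nhdsLT_iff_exists_mem_Ico_Ioo_subset hpt).1 hne
  obtain ⟨r, hlr, hrt⟩ := exists_between hl.2
  exact ⟨r, ⟨hl.1.trans_lt hlr, hrt⟩, fun s hs => hsub ⟨hlr.trans_le hs.1, hs.2⟩⟩

variable [ConditionallyCompleteLinearOrder α] [TopologicalSpace α] [OrderTopology α]
  [DenselyOrdered α] [CommRing R] [LinearOrder R] [IsStrictOrderedRing R] [TopologicalSpace R]
  [OrderClosedTopology R] {f : α → R} {p q t : α}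

theorem exists_mem_Ioo_eq_zero_of_mul_neg (hpq : p ≤ q) (hf : ContinuousOn f (Icc p q))
    (h : f p * f q < 0) : ∃ t ∈ Ioo p q, f t = 0 := by
  rcases mul_neg_iff.1 h with ⟨hp, hq⟩ | ⟨hp, hq⟩
  · exact intermediate_value_Ioo' hpq hf ⟨hq, hp⟩
  · exact intermediate_value_Ioo hpq hf ⟨hp, hq⟩

theorem mul_pos_of_forall_Ioo_ne_zero (hpq : p ≤ q) (hf : ContinuousOn f (Icc p q))
    (hne : ∀ t ∈ Ioo p q, f t ≠ 0) (hp : f p ≠ 0) (hq : f q ≠ 0) : 0 < f p * f q := by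
  refine (mul_ne_zero hp hq).lt_or_gt.resolve_left fun h => ?_
  obtain ⟨t, ht, hzero⟩ := exists_mem_Ioo_eq_zero_of_mul_neg hpq hf h
  exact hne t ht hzero

theorem ChangesSignAt.mul_neg (h : ChangesSignAt f t) (hpt : p < t) (htq : t < q)
    (hf : ContinuousOn f (Icc p q)) (hleft : ∀ s ∈ Ico p t, f s ≠ 0)
    (hright : ∀ u ∈ Ioc t q, f u ≠ 0) : f p * f q < 0 := by
  have := nhdsLT_neBot_of_exists_lt ⟨p, hpt⟩
  have := nhdsGT_neBot_of_exists_gt ⟨q, htq⟩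
  obtain ⟨s, hs, hps, hst⟩ := (h.and (Ioo_mem_nhdsLT hpt)).exists
  obtain ⟨u, hopp, htu, huq⟩ := (hs.and (Ioo_mem_nhdsGT htq)).exists
  have hsame_left : 0 < f p * f s :=
    mul_pos_of_forall_Ioo_ne_zero hps.le (hf.mono (Icc_subset_Icc_right (hst.trans htq).le))
      (fun r hr => hleft r ⟨hr.1.le, hr.2.trans hst⟩) (hleft p ⟨le_rfl, hpt⟩)
      (hleft s ⟨hps.le, hst⟩)
  have hsame_right : 0 < f u * f q :=
    mul_pos_of_forall_Ioo_ne_zero huq.le (hf.mono (Icc_subset_Icc_left (hpt.trans htu).le))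
      (fun r hr => hright r ⟨htu.trans hr.1, hr.2.le⟩) (hright u ⟨htu, huq.le⟩)
      (hright q ⟨htq, le_rfl⟩)
  have hprod : 0 < f p * f q * (f s * f u) :=
    calc 0 < f p * f s * (f u * f q) := mul_pos hsame_left hsame_right
      _ = f p * f q * (f s * f u) := by ring
  exact neg_of_mul_pos_left hprod hopp.le

theorem odd_ncard_zeros_iff_mul_neg (hpq : p ≤ q) (hf : ContinuousOn f (Icc p q))
    (hfin : {t ∈ Ioo p q | f t = 0}.Finite)
    (hsign : ∀ t ∈ Ioo p q, f t = 0 → ChangesSignAt f t) (hp : f p ≠ 0) (hq : f q ≠ 0) :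
    Odd {t ∈ Ioo p q | f t = 0}.ncard ↔ f p * f q < 0 := by
  induction hn : {t ∈ Ioo p q | f t = 0}.ncard generalizing q with
  | zero =>
    have hempty := (ncard_eq_zero hfin).1 hn
    have hpos := mul_pos_of_forall_Ioo_ne_zero hpq hf
      (fun t ht hzero => (hempty.subset ⟨ht, hzero⟩).elim) hp hq
    simp [hpos.le]
  | succ n ih =>
    obtain ⟨t, ⟨⟨hpt, htq⟩, hzero⟩, hmax⟩ :=
      exists_max_image _ id hfin (nonempty_of_ncard_ne_zero (by omega))
    have hchange := hsign t ⟨hpt, htq⟩ hzero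
    obtain ⟨r, ⟨hpr, hrt⟩, hleft⟩ := hchange.exists_forall_Ico_ne_zero hpt htq
    have hright : ∀ u ∈ Ioo t q, f u ≠ 0 := fun u hu hu0 =>
      hu.1.not_ge (hmax u ⟨⟨hpt.trans hu.1, hu.2⟩, hu0⟩)
    have hlast : f r * f q < 0 :=
      hchange.mul_neg hrt htq (hf.mono (Icc_subset_Icc_left hpr.le)) hleft fun u hu =>
        hu.2.eq_or_lt.elim (fun huq => huq ▸ hq) fun huq => hright u ⟨hu.1, huq⟩
    have hinsert := zeros_Ioo_eq_insert hpt hrt htq hzero hleft hright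
    have hfin_r : {s ∈ Ioo p r | f s = 0}.Finite := hfin.subset (hinsert ▸ subset_insert _ _)
    have hcard : {s ∈ Ioo p r | f s = 0}.ncard = n := by
      rw [hinsert, ncard_insert_of_notMem (fun ht => hrt.not_gt ht.1.2) hfin_r] at hn
      omega
    have hodd := ih hpr.le (hf.mono (Icc_subset_Icc_right (hrt.trans htq).le)) hfin_r
      (fun s hs => hsign s ⟨hs.1, hs.2.trans (hrt.trans htq)⟩) (hleft r ⟨le_rfl, hrt⟩) hcard
    have hflip : ¬ f p * f r < 0 ↔ f p * f q < 0 := by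
      rcases hp.lt_or_gt with hp | hp <;>
        rcases mul_neg_iff.1 hlast with ⟨hr, hq⟩ | ⟨hr, hq⟩ <;>
        simp [mul_neg_iff, hp, hr, hq, hp.not_gt, hr.not_gt, hq.not_gt]
    rw [Nat.odd_add_one, hodd, hflip]

end SignChange

section EdgePairs

variable {ι M : Type*} [Fintype ι] [LinearOrder ι] [AddCommMonoid M] {w : ι → ι → ι → ι → M}

theorem sum_ordered_edgePairs_eq_two_nsmul_sum (hsymm : ∀ i j k l, w i j k l = w k l i j)
    (hleft : ∀ i j l, i < j → i < l → j ≠ l → w i j i l = 0) :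
    ∑ p : (ι × ι) × (ι × ι), (if p.1.1 < p.1.2 ∧ p.2.1 < p.2.2 ∧ p.1 ≠ p.2 then
        w p.1.1 p.1.2 p.2.1 p.2.2 else 0) =
      2 • ∑ p : (ι × ι) × (ι × ι), (if p.1.1 < p.1.2 ∧ p.2.1 < p.2.2 ∧ p.1.1 < p.2.1 then
        w p.1.1 p.1.2 p.2.1 p.2.2 else 0) := by
  set g : (ι × ι) × (ι × ι) → M := fun p =>
    if p.1.1 < p.1.2 ∧ p.2.1 < p.2.2 ∧ p.1.1 < p.2.1 then w p.1.1 p.1.2 p.2.1 p.2.2 else 0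
    with hg
  have hsplit (p : (ι × ι) × (ι × ι)) :
      (if p.1.1 < p.1.2 ∧ p.2.1 < p.2.2 ∧ p.1 ≠ p.2 then w p.1.1 p.1.2 p.2.1 p.2.2 else 0) =
        g p + g p.swap := by
    obtain ⟨⟨i, j⟩, k, l⟩ := p
    rcases lt_trichotomy i k with h | rfl | h
    · simp [hg, h, h.ne, h.not_gt]
    · simpa [hg] using hleft i j l
    · simp [hg, h, h.ne', h.not_gt, hsymm k l, and_comm]
  have hswap : ∑ p : (ι × ι) × (ι × ι), g p.swap = ∑ p, g p := (Equiv.prodComm _ _).sum_comp g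
  simp only [hsplit, Finset.sum_add_distrib, hswap, two_nsmul]

theorem sum_edgePairs_eq_sum_quadruples (hpath : ∀ i j l, i < j → j < l → w i j j l = 0)
    (hright : ∀ i j k, i < k → k < j → w i j k j = 0) :
    ∑ p : (ι × ι) × (ι × ι), (if p.1.1 < p.1.2 ∧ p.2.1 < p.2.2 ∧ p.1.1 < p.2.1 then
        w p.1.1 p.1.2 p.2.1 p.2.2 else 0) =
      ∑ a, ∑ b, ∑ c, ∑ d,
        (if a < b ∧ b < c ∧ c < d then w a b c d + w a c b d + w a d b c else 0) := by
  have hsplit (i j k l : ι) : (if i < j ∧ k < l ∧ i < k then w i j k l else 0) =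
      (if i < j ∧ j < k ∧ k < l then w i j k l else 0) +
        (if i < k ∧ k < j ∧ j < l then w i j k l else 0) +
        (if i < k ∧ k < l ∧ l < j then w i j k l else 0) := by
    have := hpath i j l
    have := hright i j k
    rcases lt_trichotomy j k with h | h | h <;> rcases lt_trichotomy j l with h' | h' | h' <;>
      grind
  have hite (a b c d : ι) :
      (if a < b ∧ b < c ∧ c < d then w a b c d + w a c b d + w a d b c else 0) =
      (if a < b ∧ b < c ∧ c < d then w a b c d else 0) +
        (if a < b ∧ b < c ∧ c < d then w a c b d else 0) +
        (if a < b ∧ b < c ∧ c < d then w a d b c else 0) := by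
    split_ifs <;> simp
  simp only [Fintype.sum_prod_type, hsplit, hite, Finset.sum_add_distrib]
  congr 1
  · congr 1
    exact Finset.sum_congr rfl fun i _ => Finset.sum_comm
  · exact Finset.sum_congr rfl fun i _ => Finset.sum_comm.trans
      (Finset.sum_congr rfl fun k _ => Finset.sum_comm)

end EdgePairs

namespace Sig

variable {a b c d : Bool}

theorem allowedForm_iff : AllowedForm a b c d ↔ (a = c → b = c) ∧ (d = b → c = b) := by
  cases a <;> cases b <;> cases c <;> cases d <;> simp [AllowedForm]

theorem AllowedForm.middle_eq_of_outer_eq (h : AllowedForm a b c d) (had : a = d) : b = c := by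
  cases a <;> cases b <;> cases c <;> cases d <;> simp_all [AllowedForm]

theorem AllowedForm.convexForm_iff (h : AllowedForm a b c d) :
    ConvexForm a b c d ↔ a = d ∨ b ≠ c := by
  cases a <;> cases b <;> cases c <;> cases d <;> simp_all [AllowedForm, ConvexForm]

end Sig

namespace XMonotoneDrawing

variable {n : ℕ} {D : XMonotoneDrawing n} {a b c d i j k l : Fin n} {p q t : ℝ}

/-- The signed vertical distance from edge `{k, l}` up to edge `{i, j}`; the crossings of the two
edges are its zeros in the interior of their common parameter interval. -/
def edgeDiff (D : XMonotoneDrawing n) (i j k l : Fin n) (t : ℝ) : ℝ :=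
  D.e i j t - D.e k l t

theorem crossSet_comm (D : XMonotoneDrawing n) (i j k l : Fin n) :
    D.crossSet i j k l = D.crossSet k l i j := by
  simp only [crossSet, max_comm (D.x i), min_comm (D.x j), eq_comm (a := D.e i j _)]

theorem crossCount_comm (D : XMonotoneDrawing n) (i j k l : Fin n) :
    D.crossCount i j k l = D.crossCount k l i j := by
  rw [crossCount, crossSet_comm, crossCount]

theorem crossCount_eq_zero_of_le (D : XMonotoneDrawing n) (i l : Fin n) (hjk : j ≤ k) :
    D.crossCount i j k l = 0 := by
  have hempty : D.crossSet i j k l = ∅ := Set.eq_empty_of_forall_notMem fun t ht =>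
    (((le_max_right _ _).trans_lt ht.1).trans (ht.2.1.trans_le (min_le_left _ _))).not_ge
      (D.x_strictMono.monotone hjk)
  rw [crossCount, hempty, Set.ncard_empty]

theorem crossSet_eq_zeros_edgeDiff (hp : max (D.x i) (D.x k) = p)
    (hq : min (D.x j) (D.x l) = q) :
    D.crossSet i j k l = {t ∈ Set.Ioo p q | D.edgeDiff i j k l t = 0} := by
  simp only [crossSet, edgeDiff, hp, hq, Set.mem_Ioo, sub_eq_zero, and_assoc]

theorem continuousOn_edgeDiff (hij : i < j) (hkl : k < l) :
    ContinuousOn (D.edgeDiff i j k l)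
      (Set.Icc (max (D.x i) (D.x k)) (min (D.x j) (D.x l))) :=
  ((D.cont i j hij).mono (Set.Icc_subset_Icc (le_max_left _ _) (min_le_left _ _))).sub
    ((D.cont k l hkl).mono (Set.Icc_subset_Icc (le_max_right _ _) (min_le_right _ _)))

theorem changesSignAt_edgeDiff (hij : i < j) (hkl : k < l) (hne : (i, j) ≠ (k, l))
    (ht : t ∈ D.crossSet i j k l) : ChangesSignAt (D.edgeDiff i j k l) t := by
  obtain ⟨hleft, hright, heq⟩ := ht
  obtain ⟨ε, hε, hsign⟩ := D.sign_change i j k l hij hkl hne t hleft hright heq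
  filter_upwards [Ioo_mem_nhdsLT hleft, Ioo_mem_nhdsLT (sub_lt_self t hε)] with s hs hsε
  filter_upwards [Ioo_mem_nhdsGT hright, Ioo_mem_nhdsGT (lt_add_of_pos_right t hε)] with u hu huε
  exact hsign s hs.1 hsε.1 hs.2 u hu.2 hu.1 huε.2

theorem odd_crossCount_iff_mul_neg (hij : i < j) (hkl : k < l) (hne : (i, j) ≠ (k, l))
    (hp : max (D.x i) (D.x k) = p) (hq : min (D.x j) (D.x l) = q) (hpq : p ≤ q)
    (hp0 : D.edgeDiff i j k l p ≠ 0) (hq0 : D.edgeDiff i j k l q ≠ 0) :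
    Odd (D.crossCount i j k l) ↔ D.edgeDiff i j k l p * D.edgeDiff i j k l q < 0 := by
  have hzeros := crossSet_eq_zeros_edgeDiff hp hq
  rw [crossCount, hzeros]
  refine odd_ncard_zeros_iff_mul_neg hpq (hp ▸ hq ▸ continuousOn_edgeDiff hij hkl) ?_
    (fun t ht h0 => changesSignAt_edgeDiff hij hkl hne (hzeros ▸ ⟨ht, h0⟩)) hp0 hq0
  exact hzeros ▸ D.cross_finite i j k l hij hkl hne

theorem edgeDiff_mul_nonneg_of_crossCount_eq_zero (hij : i < j) (hkl : k < l)
    (hne : (i, j) ≠ (k, l)) (h : D.crossCount i j k l = 0) (hp : max (D.x i) (D.x k) ≤ p)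
    (hpq : p ≤ q) (hq : q ≤ min (D.x j) (D.x l)) :
    0 ≤ D.edgeDiff i j k l p * D.edgeDiff i j k l q := by
  by_contra! hneg
  obtain ⟨t, ht, h0⟩ := exists_mem_Ioo_eq_zero_of_mul_neg hpq
    ((continuousOn_edgeDiff hij hkl).mono (Set.Icc_subset_Icc hp hq)) hneg
  have hempty := (Set.ncard_eq_zero (D.cross_finite i j k l hij hkl hne)).1 h
  exact hempty.subset ⟨hp.trans_lt ht.1, ht.2.trans_le hq, sub_eq_zero.1 h0⟩

theorem sig_eq_sig_iff_mul_pos {a' b' c' : Fin n} (hab : a < b) (hbc : b < c) (hab' : a' < b')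
    (hbc' : b' < c') :
    D.sig a b c = D.sig a' b' c' ↔ 0 < D.e a c (D.x b) * D.e a' c' (D.x b') := by
  have h := D.avoid_vertex a b c hab hbc
  have h' := D.avoid_vertex a' b' c' hab' hbc'
  rcases h.lt_or_gt with h | h <;> rcases h'.lt_or_gt with h' | h' <;>
    simp [sig, mul_pos_iff, h, h', h.not_gt, h'.not_gt]

theorem sig_ne_sig_iff_mul_neg {a' b' c' : Fin n} (hab : a < b) (hbc : b < c) (hab' : a' < b')
    (hbc' : b' < c') :
    D.sig a b c ≠ D.sig a' b' c' ↔ D.e a c (D.x b) * D.e a' c' (D.x b') < 0 := by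
  have hne := mul_ne_zero (D.avoid_vertex a b c hab hbc) (D.avoid_vertex a' b' c' hab' hbc')
  rw [Ne, sig_eq_sig_iff_mul_pos hab hbc hab' hbc', not_lt, hne.le_iff_lt]

theorem odd_crossCount_interlaced_iff (hab : a < b) (hbc : b < c) (hcd : c < d) :
    Odd (D.crossCount a c b d) ↔ D.sig a b c = D.sig b c d := by
  have hac := hab.trans hbc
  have hbd := hbc.trans hcd
  have hdiff_b : D.edgeDiff a c b d (D.x b) = D.e a c (D.x b) := by
    rw [edgeDiff, D.end_left b d hbd, sub_zero]
  have hdiff_c : D.edgeDiff a c b d (D.x c) = -D.e b d (D.x c) := by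
    rw [edgeDiff, D.end_right a c hac, zero_sub]
  rw [sig_eq_sig_iff_mul_pos hab hbc hbc hcd, odd_crossCount_iff_mul_neg hac hbd
    (by simp [hab.ne]) (max_eq_right (D.x_strictMono hab).le)
    (min_eq_left (D.x_strictMono hcd).le) (D.x_strictMono hbc).le
    (hdiff_b ▸ D.avoid_vertex a b c hab hbc)
    (hdiff_c ▸ neg_ne_zero.2 (D.avoid_vertex b c d hbc hcd)), hdiff_b, hdiff_c, mul_neg,
    neg_lt_zero]

theorem odd_crossCount_nested_iff (hab : a < b) (hbc : b < c) (hcd : c < d) :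
    Odd (D.crossCount a d b c) ↔ D.sig a b d ≠ D.sig a c d := by
  have hac := hab.trans hbc
  have hbd := hbc.trans hcd
  have hdiff_b : D.edgeDiff a d b c (D.x b) = D.e a d (D.x b) := by
    rw [edgeDiff, D.end_left b c hbc, sub_zero]
  have hdiff_c : D.edgeDiff a d b c (D.x c) = D.e a d (D.x c) := by
    rw [edgeDiff, D.end_right b c hbc, sub_zero]
  rw [sig_ne_sig_iff_mul_neg hab hbd hac hcd, odd_crossCount_iff_mul_neg (hac.trans hcd) hbc
    (by simp [hab.ne]) (max_eq_right (D.x_strictMono hab).le)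
    (min_eq_right (D.x_strictMono hcd).le) (D.x_strictMono hbc).le
    (hdiff_b ▸ D.avoid_vertex a b d hab hbd) (hdiff_c ▸ D.avoid_vertex a c d hac hcd),
    hdiff_b, hdiff_c]

theorem sig_eq_of_crossCount_common_left_eq_zero (hab : a < b) (hbc : b < c) (hcd : c < d)
    (h : D.crossCount a c a d = 0) (hsig : D.sig a b c = D.sig a c d) :
    D.sig a b d = D.sig a c d := by
  have hac := hab.trans hbc
  have hbd := hbc.trans hcd
  have horder := edgeDiff_mul_nonneg_of_crossCount_eq_zero hac (hac.trans hcd) (by simp [hcd.ne])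
    h (p := D.x b) (q := D.x c) (by simpa using (D.x_strictMono hab).le)
    (D.x_strictMono hbc).le (by simpa using (D.x_strictMono hcd).le)
  rw [edgeDiff, edgeDiff, D.end_right a c hac] at horder
  rw [sig_eq_sig_iff_mul_pos hab hbc hac hcd] at hsig
  rw [sig_eq_sig_iff_mul_pos hab hbd hac hcd]
  have hle : D.e a c (D.x b) * D.e a d (D.x c) ≤ D.e a d (D.x b) * D.e a d (D.x c) := by
    linarith
  exact hsig.trans_le hle

theorem sig_eq_of_crossCount_common_right_eq_zero (hab : a < b) (hbc : b < c) (hcd : c < d)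
    (h : D.crossCount a d b d = 0) (hsig : D.sig b c d = D.sig a b d) :
    D.sig a c d = D.sig a b d := by
  have hac := hab.trans hbc
  have hbd := hbc.trans hcd
  have horder := edgeDiff_mul_nonneg_of_crossCount_eq_zero (hab.trans hbd) hbd (by simp [hab.ne])
    h (p := D.x b) (q := D.x c) (by simpa using (D.x_strictMono hab).le)
    (D.x_strictMono hbc).le (by simpa using (D.x_strictMono hcd).le)
  rw [edgeDiff, edgeDiff, D.end_left b d hbd] at horder
  rw [sig_eq_sig_iff_mul_pos hbc hcd hab hbd] at hsig
  rw [sig_eq_sig_iff_mul_pos hac hcd hab hbd]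
  have hle : D.e b d (D.x c) * D.e a d (D.x b) ≤ D.e a d (D.x c) * D.e a d (D.x b) := by
    linarith
  exact hsig.trans_le hle

theorem Semisimple.admissible_sig (hD : D.Semisimple) : Sig.Admissible D.sig := by
  intro a b c d hab hbc hcd
  have hac := hab.trans hbc
  have hbd := hbc.trans hcd
  exact Sig.allowedForm_iff.2
    ⟨sig_eq_of_crossCount_common_left_eq_zero hab hbc hcd
      (hD a c a d hac (hac.trans hcd) (by simp [hcd.ne]) (by simp [Adj])),
    sig_eq_of_crossCount_common_right_eq_zero hab hbc hcd
      (hD a d b d (hab.trans hbd) hbd (by simp [hab.ne]) (by simp [Adj]))⟩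

theorem Semisimple.convex4_iff_odd_or_odd (hD : D.Semisimple) (hab : a < b) (hbc : b < c)
    (hcd : c < d) :
    Sig.Convex4 D.sig a b c d ↔ Odd (D.crossCount a c b d) ∨ Odd (D.crossCount a d b c) := by
  rw [odd_crossCount_interlaced_iff hab hbc hcd, odd_crossCount_nested_iff hab hbc hcd]
  exact (hD.admissible_sig a b c d hab hbc hcd).convexForm_iff

theorem Semisimple.not_odd_nested_of_odd_interlaced (hD : D.Semisimple) (hab : a < b)
    (hbc : b < c) (hcd : c < d) (h : Odd (D.crossCount a c b d)) :
    ¬ Odd (D.crossCount a d b c) := by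
  rw [odd_crossCount_interlaced_iff hab hbc hcd] at h
  rw [odd_crossCount_nested_iff hab hbc hcd, not_not]
  exact (hD.admissible_sig a b c d hab hbc hcd).middle_eq_of_outer_eq h

theorem Semisimple.cr_eq_sum_quadruples (hD : D.Semisimple) :
    D.cr = ∑ a, ∑ b, ∑ c, ∑ d, (if a < b ∧ b < c ∧ c < d then
      D.crossCount a b c d + D.crossCount a c b d + D.crossCount a d b c else 0) := by
  rw [cr, sum_ordered_edgePairs_eq_two_nsmul_sum D.crossCount_comm
      fun i j l hij hil hjl => hD i j i l hij hil (by simp [hjl]) (by simp [Adj]),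
    sum_edgePairs_eq_sum_quadruples fun i j l _ _ => D.crossCount_eq_zero_of_le i l le_rfl,
    smul_eq_mul, Nat.mul_div_cancel_left _ two_pos]
  exact fun i j k hik hkj =>
    hD i j k j (hik.trans hkj) hkj (by simp [hik.ne]) (by simp [Adj])

theorem Simple.semisimple (hD : D.Simple) : D.Semisimple :=
  fun i j k l hij hkl hne => (hD i j k l hij hkl hne).1

open Classical in
theorem Simple.sum_crossCount_eq_ite_convex4 (hD : D.Simple) (hab : a < b) (hbc : b < c)
    (hcd : c < d) :
    D.crossCount a b c d + D.crossCount a c b d + D.crossCount a d b c =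
      if Sig.Convex4 D.sig a b c d then 1 else 0 := by
  have hac := hab.trans hbc
  have hbd := hbc.trans hcd
  have hdisjoint := D.crossCount_eq_zero_of_le a d hbc.le
  have hinterlaced := (hD a c b d hac hbd (by simp [hab.ne])).2 (by unfold Adj; grind)
  have hnested := (hD a d b c (hac.trans hcd) hbc (by simp [hab.ne])).2 (by unfold Adj; grind)
  have hexcl := hD.semisimple.not_odd_nested_of_odd_interlaced hab hbc hcd
  rw [hD.semisimple.convex4_iff_odd_or_odd hab hbc hcd, hdisjoint]
  interval_cases D.crossCount a c b d <;> interval_cases D.crossCount a d b c <;> simp_all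

end XMonotoneDrawing

/-- In a simple x-monotone drawing `D` of `K n`, the total number of
crossings equals the number of increasing 4-tuples that are convex in `σ_D`; moreover,
two non-adjacent edges cross only if their four endpoint indices form a convex 4-tuple
in `σ_D`. -/
theorem simple_monotone_cr_eq_convex_count (n : ℕ) (D : XMonotoneDrawing n)
    (hD : D.Simple) :
    D.cr = {q : Fin n × Fin n × Fin n × Fin n |
        q.1 < q.2.1 ∧ q.2.1 < q.2.2.1 ∧ q.2.2.1 < q.2.2.2 ∧
        Sig.Convex4 D.sig q.1 q.2.1 q.2.2.1 q.2.2.2}.ncard ∧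
    (∀ a b c d : Fin n, a < b → b < c → c < d →
      (0 < D.crossCount a b c d ∨ 0 < D.crossCount a c b d ∨ 0 < D.crossCount a d b c) →
      Sig.Convex4 D.sig a b c d) := by
  classical
  refine ⟨?_, fun a b c d hab hbc hcd hcross => ?_⟩
  · rw [hD.semisimple.cr_eq_sum_quadruples, Set.ncard_eq_toFinset_card', Set.toFinset_ofPred,
      Finset.card_filter]
    simp only [Fintype.sum_prod_type]
    refine Fintype.sum_congr _ _ fun a => Fintype.sum_congr _ _ fun b =>
      Fintype.sum_congr _ _ fun c => Fintype.sum_congr _ _ fun d => ?_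
    by_cases h : a < b ∧ b < c ∧ c < d
    · simp [h, hD.sum_crossCount_eq_ite_convex4 h.1 h.2.1 h.2.2]
    · grind
  · have hsum := hD.sum_crossCount_eq_ite_convex4 hab hbc hcd
    by_contra hconvex
    rw [if_neg hconvex] at hsum
    omega
end
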